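/- arXiv:2110.12907 — 2 statements merged into one kernel-verified Lean document; each statement's English description precedes it below -/
import Mathlib

section
/- For every measurable h : ℝ^m → ℝ with ∫ h(q)²/f(q) dq < ∞, one has ∫ (T h)(q)²/f(q) dq ≤ ∫ h(q)²/f(q) dq; that is, the HMC operator T does not increase the weighted L² norm: ‖T h‖ ≤ ‖h‖. -/
open MeasureTheory

/-!
Write `(T h)(q) = ∫ h(q') g(p') dp` with `(q', p') = R (q, p)`. Invariance of `f(q) g(p)` under `R`
makes the square of the integrand the product of `h(q')² / f(q') * g(p')` and
`f(q') g(p') = f(q) g(p)`, so Cauchy–Schwarz in `p` gives `(T h)² ≤ T (h² / f) * f * ∫ g`. Divide by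
`f` and integrate in `q`: since `R` preserves the measure, `T` multiplies integrals by `∫ g`.
-/

section CauchySchwarz

variable {Ω : Type*} [MeasurableSpace Ω] {μ : Measure Ω} {u v r : Ω → ℝ}

theorem integrable_of_sq_le_mul (hu : Integrable u μ) (hv : Integrable v μ)
    (hu_nonneg : 0 ≤ᵐ[μ] u) (hv_nonneg : 0 ≤ᵐ[μ] v) (hr : AEStronglyMeasurable r μ)
    (hruv : ∀ᵐ x ∂μ, r x ^ 2 ≤ u x * v x) : Integrable r μ := by
  refine (hu.add hv).mono' hr ?_
  filter_upwards [hu_nonneg, hv_nonneg, hruv] with x hux hvx hrx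
  have htwo : 2 * |r x| ≤ u x + v x :=
    two_mul_le_add_of_sq_le_mul hux hvx ((sq_abs (r x)).trans_le hrx)
  rw [Real.norm_eq_abs, Pi.add_apply]
  linarith [abs_nonneg (r x)]

theorem sq_integral_le_integral_mul_integral_of_sq_le_mul (hu : Integrable u μ)
    (hv : Integrable v μ) (hr : Integrable r μ) (hu_nonneg : 0 ≤ᵐ[μ] u) (hv_nonneg : 0 ≤ᵐ[μ] v)
    (hruv : ∀ᵐ x ∂μ, r x ^ 2 ≤ u x * v x) :
    (∫ x, r x ∂μ) ^ 2 ≤ (∫ x, u x ∂μ) * ∫ x, v x ∂μ := by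
  have hquad (t : ℝ) :
      0 ≤ (∫ x, u x ∂μ) * (t * t) + 2 * (∫ x, r x ∂μ) * t + ∫ x, v x ∂μ := by
    have hpointwise : ∀ᵐ x ∂μ, 0 ≤ u x * (t * t) + 2 * r x * t + v x := by
      filter_upwards [hu_nonneg, hv_nonneg, hruv] with x hux hvx hrx
      have hscaled : (-(r x * t)) ^ 2 ≤ u x * (t * t) * v x := by
        linarith [mul_le_mul_of_nonneg_right hrx (mul_self_nonneg t)]
      have htwo := two_mul_le_add_of_sq_le_mul (mul_nonneg hux (mul_self_nonneg t)) hvx hscaled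
      linarith
    have hut := hu.mul_const (t * t)
    have hrt := (hr.const_mul 2).mul_const t
    have hut_add_hrt : Integrable (fun x => u x * (t * t) + 2 * r x * t) μ := hut.add hrt
    calc 0 ≤ ∫ x, u x * (t * t) + 2 * r x * t + v x ∂μ := integral_nonneg_of_ae hpointwise
      _ = _ := by
        rw [integral_add hut_add_hrt hv, integral_add hut hrt, integral_mul_const,
          integral_mul_const, integral_const_mul]
  have hdiscrim := discrim_le_zero hquad
  rw [discrim] at hdiscrim
  linarith

end CauchySchwarz

theorem integral_comp_of_measurePreserving {α β E : Type*} [MeasurableSpace α] [MeasurableSpace β]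
    [NormedAddCommGroup E] [NormedSpace ℝ E] {μ : Measure α} {ν : Measure β} {φ : α → β}
    (hφ : MeasurePreserving φ μ ν) {k : β → E} (hk : AEStronglyMeasurable k ν) :
    ∫ x, k (φ x) ∂μ = ∫ y, k y ∂ν := by
  rw [← hφ.map_eq] at hk ⊢
  exact (integral_map hφ.aemeasurable hk).symm

/-- The Hamiltonian Monte Carlo operator `T` with momentum density `g` and motion `R`: it averages
`h` over the positions reached from `q`, weighted by the density of the momentum after the motion.
Densities of momenta are taken with respect to `ν`. -/
noncomputable def hmcOperator {X Y : Type*} [MeasurableSpace Y] (ν : Measure Y) (g : Y → ℝ)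
    (R : X × Y → X × Y) (h : X → ℝ) (q : X) : ℝ :=
  ∫ p, h (R (q, p)).1 * g (R (q, p)).2 ∂ν

section HMC

variable {X Y : Type*} [MeasurableSpace X] [MeasurableSpace Y] {μ : Measure X} {ν : Measure Y}
  {f h k : X → ℝ} {g : Y → ℝ} {R : X × Y → X × Y}

section Transport

variable (hR : MeasurePreserving R (μ.prod ν) (μ.prod ν))
include hR

theorem aestronglyMeasurable_hmcIntegrand (hk : AEStronglyMeasurable k μ)
    (hg : AEStronglyMeasurable g ν) :
    AEStronglyMeasurable (fun z => k (R z).1 * g (R z).2) (μ.prod ν) :=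
  (hk.comp_fst.mul hg.comp_snd).comp_measurePreserving hR

theorem integrable_hmcIntegrand (hk : Integrable k μ) (hg : Integrable g ν) :
    Integrable (fun z => k (R z).1 * g (R z).2) (μ.prod ν) :=
  hR.integrable_comp_of_integrable (hk.mul_prod hg)

theorem ae_hmcIntegrand_sq_div_nonneg (hf_pos : ∀ᵐ q ∂μ, 0 < f q) (hg_nonneg : 0 ≤ᵐ[ν] g) :
    ∀ᵐ z ∂μ.prod ν, 0 ≤ h (R z).1 ^ 2 / f (R z).1 * g (R z).2 := by
  have hf_fst : ∀ᵐ z ∂μ.prod ν, 0 < f z.1 := Measure.quasiMeasurePreserving_fst.ae hf_pos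
  have hg_snd : ∀ᵐ z ∂μ.prod ν, 0 ≤ g z.2 := Measure.quasiMeasurePreserving_snd.ae hg_nonneg
  filter_upwards [hR.quasiMeasurePreserving.ae hf_fst, hR.quasiMeasurePreserving.ae hg_snd]
    with z hfz hgz
  positivity

theorem ae_sq_hmcIntegrand_eq_mul (hf_pos : ∀ᵐ q ∂μ, 0 < f q)
    (hinv : ∀ᵐ z ∂μ.prod ν, f (R z).1 * g (R z).2 = f z.1 * g z.2) :
    ∀ᵐ z ∂μ.prod ν, (h (R z).1 * g (R z).2) ^ 2 =
      h (R z).1 ^ 2 / f (R z).1 * g (R z).2 * (f z.1 * g z.2) := by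
  have hf_fst : ∀ᵐ z ∂μ.prod ν, 0 < f z.1 := Measure.quasiMeasurePreserving_fst.ae hf_pos
  filter_upwards [hR.quasiMeasurePreserving.ae hf_fst, hinv] with z hfz hinvz
  rw [← hinvz]
  field_simp

variable [SFinite ν]

theorem aestronglyMeasurable_hmcOperator (hk : AEStronglyMeasurable k μ)
    (hg : AEStronglyMeasurable g ν) : AEStronglyMeasurable (hmcOperator ν g R k) μ :=
  (aestronglyMeasurable_hmcIntegrand hR hk hg).integral_prod_right'

theorem integrable_hmcOperator (hk : Integrable k μ) (hg : Integrable g ν) :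
    Integrable (hmcOperator ν g R k) μ :=
  (integrable_hmcIntegrand hR hk hg).integral_prod_left

theorem integral_hmcOperator [SFinite μ] (hk : Integrable k μ) (hg : Integrable g ν) :
    ∫ q, hmcOperator ν g R k q ∂μ = (∫ q, k q ∂μ) * ∫ p, g p ∂ν :=
  calc ∫ q, hmcOperator ν g R k q ∂μ
      = ∫ z, k (R z).1 * g (R z).2 ∂μ.prod ν :=
        (integral_prod _ (integrable_hmcIntegrand hR hk hg)).symm
    _ = ∫ z, k z.1 * g z.2 ∂μ.prod ν :=
        integral_comp_of_measurePreserving hR (hk.mul_prod hg).aestronglyMeasurable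
    _ = (∫ q, k q ∂μ) * ∫ p, g p ∂ν := integral_prod_mul k g

end Transport

section Contraction

variable [SFinite μ] [SFinite ν] (hf_pos : ∀ᵐ q ∂μ, 0 < f q) (hg : Integrable g ν)
  (hg_nonneg : 0 ≤ᵐ[ν] g) (hR : MeasurePreserving R (μ.prod ν) (μ.prod ν))
  (hinv : ∀ᵐ z ∂μ.prod ν, f (R z).1 * g (R z).2 = f z.1 * g z.2)
  (hh : AEStronglyMeasurable h μ) (hh_sq : Integrable (fun q => h q ^ 2 / f q) μ)
include hf_pos hg hg_nonneg hR hinv hh hh_sq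

theorem ae_integrable_hmcIntegrand :
    ∀ᵐ q ∂μ, Integrable (fun p => h (R (q, p)).1 * g (R (q, p)).2) ν := by
  filter_upwards [hf_pos, (integrable_hmcIntegrand hR hh_sq hg).prod_right_ae,
    (aestronglyMeasurable_hmcIntegrand hR hh hg.aestronglyMeasurable).prodMk_left,
    Measure.ae_ae_of_ae_prod (ae_hmcIntegrand_sq_div_nonneg hR hf_pos hg_nonneg),
    Measure.ae_ae_of_ae_prod (ae_sq_hmcIntegrand_eq_mul hR hf_pos hinv)]
    with q hfq hint hmeas hnonneg hsq
  exact integrable_of_sq_le_mul hint (hg.const_mul (f q)) hnonneg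
    (hg_nonneg.mono fun p hgp => mul_nonneg hfq.le hgp) hmeas (hsq.mono fun p hp => hp.le)

theorem ae_sq_hmcOperator_le :
    ∀ᵐ q ∂μ, hmcOperator ν g R h q ^ 2 ≤
      hmcOperator ν g R (fun q => h q ^ 2 / f q) q * (f q * ∫ p, g p ∂ν) := by
  filter_upwards [hf_pos, (integrable_hmcIntegrand hR hh_sq hg).prod_right_ae,
    ae_integrable_hmcIntegrand hf_pos hg hg_nonneg hR hinv hh hh_sq,
    Measure.ae_ae_of_ae_prod (ae_hmcIntegrand_sq_div_nonneg hR hf_pos hg_nonneg),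
    Measure.ae_ae_of_ae_prod (ae_sq_hmcIntegrand_eq_mul hR hf_pos hinv)]
    with q hfq hint hint_h hnonneg hsq
  rw [← integral_const_mul]
  exact sq_integral_le_integral_mul_integral_of_sq_le_mul hint (hg.const_mul (f q)) hint_h hnonneg
    (hg_nonneg.mono fun p hgp => mul_nonneg hfq.le hgp) (hsq.mono fun p hp => hp.le)

theorem ae_sq_hmcOperator_div_le :
    ∀ᵐ q ∂μ, hmcOperator ν g R h q ^ 2 / f q ≤
      (∫ p, g p ∂ν) * hmcOperator ν g R (fun q => h q ^ 2 / f q) q := by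
  filter_upwards [hf_pos, ae_sq_hmcOperator_le hf_pos hg hg_nonneg hR hinv hh hh_sq] with q hfq hle
  rw [div_le_iff₀ hfq]
  linarith

end Contraction

theorem hmc_operator_nonexpansive_weighted_L2_general [SFinite μ] [SFinite ν]
    (hf : AEStronglyMeasurable f μ) (hf_pos : ∀ᵐ q ∂μ, 0 < f q)
    (hg : Integrable g ν) (hg_nonneg : 0 ≤ᵐ[ν] g)
    (hR : MeasurePreserving R (μ.prod ν) (μ.prod ν))
    (hinv : ∀ᵐ z ∂μ.prod ν, f (R z).1 * g (R z).2 = f z.1 * g z.2)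
    (hh : AEStronglyMeasurable h μ) (hh_sq : Integrable (fun q => h q ^ 2 / f q) μ) :
    (∀ᵐ q ∂μ, Integrable (fun p => h (R (q, p)).1 * g (R (q, p)).2) ν) ∧
      Integrable (fun q => hmcOperator ν g R h q ^ 2 / f q) μ ∧
      ∫ q, hmcOperator ν g R h q ^ 2 / f q ∂μ ≤ (∫ p, g p ∂ν) ^ 2 * ∫ q, h q ^ 2 / f q ∂μ := by
  have hle := ae_sq_hmcOperator_div_le hf_pos hg hg_nonneg hR hinv hh hh_sq
  have hbound := (integrable_hmcOperator hR hh_sq hg).const_mul (∫ p, g p ∂ν)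
  have hmeas : AEStronglyMeasurable (fun q => hmcOperator ν g R h q ^ 2 / f q) μ :=
    ((aestronglyMeasurable_hmcOperator hR hh hg.aestronglyMeasurable).pow 2).div₀ hf
  have hint : Integrable (fun q => hmcOperator ν g R h q ^ 2 / f q) μ := by
    refine hbound.mono' hmeas ?_
    filter_upwards [hf_pos, hle] with q hfq hleq
    rwa [Real.norm_of_nonneg (by positivity)]
  refine ⟨ae_integrable_hmcIntegrand hf_pos hg hg_nonneg hR hinv hh hh_sq, hint, ?_⟩
  calc ∫ q, hmcOperator ν g R h q ^ 2 / f q ∂μ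
      ≤ ∫ q, (∫ p, g p ∂ν) * hmcOperator ν g R (fun q => h q ^ 2 / f q) q ∂μ :=
        integral_mono_ae hint hbound hle
    _ = (∫ p, g p ∂ν) ^ 2 * ∫ q, h q ^ 2 / f q ∂μ := by
        rw [integral_const_mul, integral_hmcOperator hR hh_sq hg]
        ring

end HMC

/-- The HMC operator does not increase the weighted `L²` norm:
`∫ q, (T h q)² / f q ≤ ∫ q, (h q)² / f q`. -/
theorem hmc_operator_nonexpansive_weighted_L2
    (m : ℕ) (hm : 1 ≤ m)
    (f g : EuclideanSpace ℝ (Fin m) → ℝ)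
    (hf_meas : Measurable f)
    (hf_pos : ∀ᵐ q : EuclideanSpace ℝ (Fin m), 0 < f q)
    (hf_int : Integrable f)
    (hf_int_pos : 0 < ∫ q, f q)
    (hg_meas : Measurable g)
    (hg_nonneg : ∀ p, 0 ≤ g p)
    (hg_int : (∫ p, g p) = 1)
    (R : EuclideanSpace ℝ (Fin m) × EuclideanSpace ℝ (Fin m) →
         EuclideanSpace ℝ (Fin m) × EuclideanSpace ℝ (Fin m))
    (hR_bij : Function.Bijective R)
    (hR_mp : MeasurePreserving R volume volume)
    (hinv : ∀ q p : EuclideanSpace ℝ (Fin m),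
      f (R (q, p)).1 * g (R (q, p)).2 = f q * g p)
    (h : EuclideanSpace ℝ (Fin m) → ℝ) (hh_meas : Measurable h)
    (hh_L2 : Integrable (fun q => h q ^ 2 / f q)) :
    (∫ q, (∫ p, h (R (q, p)).1 * g (R (q, p)).2) ^ 2 / f q) ≤
      ∫ q, h q ^ 2 / f q := by
  simpa only [hmcOperator, hg_int, one_pow, one_mul] using
    (hmc_operator_nonexpansive_weighted_L2_general hf_meas.aestronglyMeasurable hf_pos
      (.of_integral_ne_zero (hg_int ▸ one_ne_zero)) (.of_forall hg_nonneg) hR_mp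
      (.of_forall fun z => hinv z.1 z.2) hh_meas.aestronglyMeasurable hh_L2).2.2
end

section
/- For every h ∈ H, the iterates converge strongly: ‖Tⁿ h − (ℓ(h)/ℓ(f))·f‖ → 0 as n → ∞. -/
/-!
For a symmetric contraction `T`, both `⟪T^(2m) x, T^(2n) x⟫` and `‖T^(m+n) x‖²` equal
`⟪x, T^(2(m+n)) x⟫`, so `‖T^(2m) x - T^(2n) x‖² = ‖T^(2m) x‖² + ‖T^(2n) x‖² - 2 ‖T^(m+n) x‖²`.
The norms `‖T^n x‖` decrease to a limit, hence the even iterates are Cauchy, and their limit `g`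
satisfies `T² g = g`. Thus `T` preserves the norms of both `g` and `T g`, so rigidity puts them on
the line spanned by `f`, where a vector is determined by its value under the invariant `ℓ`. This
gives `T g = g = (ℓ x / ℓ f) • f`, and monotonicity of `‖T^n (x - g)‖` carries the convergence over
to all iterates.
-/

open Filter
open scoped RealInnerProductSpace

open scoped InnerProductSpace Topology

section Contraction

variable {R E : Type*} [Semiring R] [SeminormedAddCommGroup E] [Module R E] {T : E →ₗ[R] E}

theorem antitone_norm_pow_apply (hT : ∀ x, ‖T x‖ ≤ ‖x‖) (x : E) :
    Antitone fun n : ℕ => ‖(T ^ n) x‖ := by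
  refine antitone_nat_of_succ_le fun n => ?_
  rw [pow_succ', Module.End.mul_apply]
  exact hT _

theorem tendsto_pow_apply_of_tendsto_subseq (hT : ∀ x, ‖T x‖ ≤ ‖x‖) {x g : E} (hg : T g = g)
    {φ : ℕ → ℕ} (hφ : Tendsto φ atTop atTop)
    (hlim : Tendsto (fun n => (T ^ φ n) x) atTop (𝓝 g)) :
    Tendsto (fun n : ℕ => (T ^ n) x) atTop (𝓝 g) := by
  have pow_sub (n : ℕ) : (T ^ n) x - g = (T ^ n) (x - g) := by
    rw [map_sub, Module.End.pow_apply T n g, Function.iterate_fixed hg]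
  rw [tendsto_iff_norm_sub_tendsto_zero] at hlim ⊢
  simp only [pow_sub] at hlim ⊢
  exact (tendsto_iff_tendsto_subseq_of_antitone (antitone_norm_pow_apply hT (x - g)) hφ).2 hlim

end Contraction

section Symmetric

variable {𝕜 E : Type*} [RCLike 𝕜]

section Seminormed

variable [SeminormedAddCommGroup E] [InnerProductSpace 𝕜 E] {T : E →ₗ[𝕜] E}

theorem inner_pow_apply_pow_apply (hT : T.IsSymmetric) (m n : ℕ) (x y : E) :
    ⟪(T ^ m) x, (T ^ n) y⟫_𝕜 = ⟪x, (T ^ (m + n)) y⟫_𝕜 := by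
  rw [hT.pow m, pow_add, Module.End.mul_apply]

theorem norm_pow_two_mul_apply_sub_sq (hT : T.IsSymmetric) (m n : ℕ) (x : E) :
    ‖(T ^ (2 * m)) x - (T ^ (2 * n)) x‖ ^ 2 =
      ‖(T ^ (2 * m)) x‖ ^ 2 + ‖(T ^ (2 * n)) x‖ ^ 2 - 2 * ‖(T ^ (m + n)) x‖ ^ 2 := by
  have inner_eq : ⟪(T ^ (2 * m)) x, (T ^ (2 * n)) x⟫_𝕜 = ⟪(T ^ (m + n)) x, (T ^ (m + n)) x⟫_𝕜 := by
    rw [inner_pow_apply_pow_apply hT, inner_pow_apply_pow_apply hT, ← mul_add, two_mul]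
  rw [@norm_sub_sq 𝕜, inner_eq, inner_self_eq_norm_sq]
  ring

theorem cauchySeq_pow_two_mul_apply (hT : T.IsSymmetric) (hcontr : ∀ x, ‖T x‖ ≤ ‖x‖) (x : E) :
    CauchySeq fun n : ℕ => (T ^ (2 * n)) x := by
  obtain ⟨r, hr⟩ : ∃ r, Tendsto (fun n : ℕ => ‖(T ^ n) x‖) atTop (𝓝 r) :=
    ⟨_, tendsto_atTop_ciInf (antitone_norm_pow_apply hcontr x)
      ⟨0, Set.forall_mem_range.2 fun _ => norm_nonneg _⟩⟩
  have sq_lim {φ : ℕ × ℕ → ℕ} (hφ : ∀ p, p.1 ≤ φ p ∨ p.2 ≤ φ p) :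
      Tendsto (fun p => ‖(T ^ φ p) x‖ ^ 2) atTop (𝓝 (r ^ 2)) := by
    refine (hr.comp (tendsto_atTop.2 fun N => ?_)).pow 2
    filter_upwards [eventually_ge_atTop (N, N)] with p hp
    exact (hφ p).elim hp.1.trans hp.2.trans
  have dist_sq_lim : Tendsto (fun p : ℕ × ℕ => ‖(T ^ (2 * p.1)) x - (T ^ (2 * p.2)) x‖ ^ 2)
      atTop (𝓝 0) := by
    simp only [norm_pow_two_mul_apply_sub_sq hT]
    convert ((sq_lim (φ := fun p => 2 * p.1) fun p => by lia).add
      (sq_lim (φ := fun p => 2 * p.2) fun p => by lia)).sub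
      ((sq_lim (φ := fun p => p.1 + p.2) fun p => by lia).const_mul 2) using 2
    ring
  rw [cauchySeq_iff_tendsto_dist_atTop_0]
  simpa [dist_eq_norm] using dist_sq_lim.sqrt

end Seminormed

variable [NormedAddCommGroup E] [InnerProductSpace 𝕜 E] [CompleteSpace E] {T : E →ₗ[𝕜] E}

theorem exists_tendsto_pow_two_mul_apply (hT : T.IsSymmetric) (hcontr : ∀ x, ‖T x‖ ≤ ‖x‖) (x : E) :
    ∃ g, T (T g) = g ∧ Tendsto (fun n : ℕ => (T ^ (2 * n)) x) atTop (𝓝 g) := by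
  obtain ⟨g, hg⟩ := cauchySeq_tendsto_of_complete (cauchySeq_pow_two_mul_apply hT hcontr x)
  refine ⟨g, isFixedPt_of_tendsto_iterate (f := T^[2]) (x := x) ?_
    (hT.continuous.iterate 2).continuousAt, hg⟩
  simpa only [Module.End.pow_apply, Function.iterate_mul] using hg

end Symmetric

theorem iterates_converge_strongly_general
    {𝕜 H : Type*} [RCLike 𝕜] [NormedAddCommGroup H] [InnerProductSpace 𝕜 H] [CompleteSpace H]
    {T : H →ₗ[𝕜] H} (hsymm : T.IsSymmetric) (hcontr : ∀ x, ‖T x‖ ≤ ‖x‖)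
    {f : H} (hrigid : ∀ x, ‖T x‖ = ‖x‖ → ∃ c : 𝕜, x = c • f)
    {ℓ : H →L[𝕜] 𝕜} (hℓ : ∀ x, ℓ (T x) = ℓ x) (hℓf : ℓ f ≠ 0) (h : H) :
    Tendsto (fun n : ℕ => (T ^ n) h) atTop (𝓝 ((ℓ h / ℓ f) • f)) := by
  obtain ⟨g, hTTg, hg⟩ := exists_tendsto_pow_two_mul_apply hsymm hcontr h
  have norm_Tg : ‖T g‖ = ‖g‖ := (hcontr g).antisymm (by simpa only [hTTg] using hcontr (T g))
  have eq_smul {x : H} (hx : ‖T x‖ = ‖x‖) : x = (ℓ x / ℓ f) • f := by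
    obtain ⟨c, rfl⟩ := hrigid x hx
    rw [map_smul, smul_eq_mul, mul_div_cancel_right₀ c hℓf]
  have Tg_eq : T g = g := by
    rw [eq_smul (x := T g) (by rw [hTTg, norm_Tg]), hℓ, ← eq_smul norm_Tg]
  have ℓg_eq : ℓ g = ℓ h := by
    refine tendsto_nhds_unique ((ℓ.continuous.tendsto g).comp hg) ?_
    have ℓ_iterate (n : ℕ) : ℓ (T^[n] h) = ℓ h :=
      congr_fun (Function.iterate_invariant (funext hℓ) n) h
    simp only [Function.comp_def, Module.End.pow_apply, ℓ_iterate, tendsto_const_nhds]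
  rw [← ℓg_eq, ← eq_smul norm_Tg]
  exact tendsto_pow_apply_of_tendsto_subseq hcontr Tg_eq
    (tendsto_id.const_mul_atTop' two_pos) hg

/-- Under self-adjointness, nonexpansiveness, a fixed point `f`,
rigidity, and a `T`-invariant continuous linear functional `ℓ` with `ℓ f ≠ 0`,
the iterates converge strongly: `‖Tⁿ h − (ℓ h / ℓ f) • f‖ → 0`. -/
theorem iterates_converge_strongly
    {H : Type*} [NormedAddCommGroup H] [InnerProductSpace ℝ H] [CompleteSpace H]
    (T : H →L[ℝ] H)
    (hsa : ∀ x y : H, ⟪T x, y⟫ = ⟪x, T y⟫)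
    (hne : ∀ x : H, ‖T x‖ ≤ ‖x‖)
    (f : H) (hf : T f = f)
    (hrigid : ∀ x : H, ‖T x‖ = ‖x‖ → ∃ c : ℝ, x = c • f)
    (ℓ : H →L[ℝ] ℝ) (hℓ : ∀ x : H, ℓ (T x) = ℓ x) (hℓf : ℓ f ≠ 0)
    (h : H) :
    Tendsto (fun n => ‖(T ^ n) h - (ℓ h / ℓ f) • f‖) atTop (nhds 0) := by
  simpa [Module.End.pow_apply] using tendsto_iff_norm_sub_tendsto_zero.1
    (iterates_converge_strongly_general (T := T.toLinearMap) hsa hne hrigid hℓ hℓf h)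
end
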